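/- arXiv:2107.04319 — 3 statements merged into one kernel-verified Lean document; each statement's English description precedes it below -/
import Mathlib

section
/- Let A ∈ ℝ^{m×n}, let t be a positive integer, and let δ ∈ [0,1) be a restricted isometry constant of order t for A. Then for every vector v ∈ ℝⁿ and every index set Ω ⊆ {1,…,n} with |Ω ∪ supp(v)| ≤ t, one has ‖((I − AᵀA)v)_Ω‖₂ ≤ δ‖v‖₂. -/
/-!
Let `Q x = ‖x‖² - ‖Ax‖²`, a quadratic form with `|Q x| ≤ δ ‖x‖²` on `t`-sparse vectors, and let
`u = ((I - AᵀA)v)_Ω`. The polar form of `Q` at `(u, v)` is `⟨u, (I - AᵀA)v⟩ = ‖u‖²`. Since every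
`u ± s v` is supported in `Ω ∪ supp v`, hence `t`-sparse, polarization gives
`4 s ‖u‖² = Q (u + s v) - Q (u - s v) ≤ 2 δ (‖u‖² + s² ‖v‖²)` for all real `s`.
Nonpositivity of the discriminant of this quadratic in `s` reads `‖u‖⁴ ≤ δ² ‖u‖² ‖v‖²`.
-/

open Matrix Finset Filter

/-- Euclidean (ℓ₂) norm of a vector. -/
noncomputable def nrm {n : ℕ} (x : Fin n → ℝ) : ℝ := Real.sqrt (∑ i, x i ^ 2)

/-- A vector is `s`-sparse if it has at most `s` nonzero entries. -/
def sparse {n : ℕ} (s : ℕ) (x : Fin n → ℝ) : Prop :=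
  ((Finset.univ : Finset (Fin n)).filter fun i => x i ≠ 0).card ≤ s

/-- Support of a vector, as a finset. -/
noncomputable def suppF {n : ℕ} (x : Fin n → ℝ) : Finset (Fin n) :=
  (Finset.univ : Finset (Fin n)).filter fun i => x i ≠ 0

/-- Restriction of a vector to an index set (zero outside). -/
def restr {n : ℕ} (x : Fin n → ℝ) (Ω : Finset (Fin n)) : Fin n → ℝ :=
  fun i => if i ∈ Ω then x i else 0

/-- `δ ∈ [0,1)` is a restricted isometry constant of order `s` for `A`. -/
def RIC {m n : ℕ} (A : Matrix (Fin m) (Fin n) ℝ) (s : ℕ) (δ : ℝ) : Prop :=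
  0 ≤ δ ∧ δ < 1 ∧ ∀ x : Fin n → ℝ, sparse s x →
    (1 - δ) * nrm x ^ 2 ≤ nrm (A.mulVec x) ^ 2 ∧
      nrm (A.mulVec x) ^ 2 ≤ (1 + δ) * nrm x ^ 2

/-- `h` is a hard thresholding of `z` at level `q` with support `Ω`. -/
def IsHT {n : ℕ} (q : ℕ) (z h : Fin n → ℝ) (Ω : Finset (Fin n)) : Prop :=
  Ω.card = q ∧ (∀ i ∈ Ω, h i = z i) ∧ (∀ i ∉ Ω, h i = 0) ∧
    ∀ i ∈ Ω, ∀ j ∉ Ω, |z j| ≤ |z i|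

lemma nrm_nonneg {n : ℕ} (x : Fin n → ℝ) : 0 ≤ nrm x := Real.sqrt_nonneg _

lemma nrm_sq {n : ℕ} (x : Fin n → ℝ) : nrm x ^ 2 = x ⬝ᵥ x := by
  unfold nrm
  rw [Real.sq_sqrt (Finset.sum_nonneg fun i _ => sq_nonneg _)]
  simp only [dotProduct, sq]

lemma sparse_of_support_subset {n t : ℕ} {x : Fin n → ℝ} {S : Finset (Fin n)}
    (hS : S.card ≤ t) (h : ∀ i ∉ S, x i = 0) : sparse t x := by
  refine (Finset.card_le_card fun i hi => ?_).trans hS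
  by_contra hiS
  exact (Finset.mem_filter.mp hi).2 (h i hiS)

lemma restr_dotProduct_self {n : ℕ} (w : Fin n → ℝ) (Ω : Finset (Fin n)) :
    restr w Ω ⬝ᵥ restr w Ω = restr w Ω ⬝ᵥ w := by
  refine Finset.sum_congr rfl fun i _ => ?_
  by_cases hi : i ∈ Ω <;> simp [restr, hi]

/-- `⟨u, (I - AᵀA)v⟩` is the polar form of `‖x‖² - ‖Ax‖²`. -/
lemma dotProduct_one_sub_mulVec {m n : ℕ} (A : Matrix (Fin m) (Fin n) ℝ) (u v : Fin n → ℝ) :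
    u ⬝ᵥ ((1 : Matrix (Fin n) (Fin n) ℝ) - Aᵀ * A).mulVec v
      = u ⬝ᵥ v - A.mulVec u ⬝ᵥ A.mulVec v := by
  rw [Matrix.sub_mulVec, Matrix.one_mulVec, dotProduct_sub, ← Matrix.mulVec_mulVec,
    Matrix.dotProduct_mulVec, Matrix.vecMul_transpose]

lemma nrm_sq_add_smul {n : ℕ} (u v : Fin n → ℝ) (s : ℝ) :
    nrm (u + s • v) ^ 2 = nrm u ^ 2 + 2 * s * (u ⬝ᵥ v) + s ^ 2 * nrm v ^ 2 := by
  simp only [nrm_sq, add_dotProduct, dotProduct_add, smul_dotProduct, dotProduct_smul,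
    smul_eq_mul, dotProduct_comm v u]
  ring

theorem stmt0 {m n : ℕ} (A : Matrix (Fin m) (Fin n) ℝ) (t : ℕ) (ht : 0 < t) (δ : ℝ)
    (hA : RIC A t δ) (v : Fin n → ℝ) (Ω : Finset (Fin n))
    (hcard : (Ω ∪ suppF v).card ≤ t) :
    nrm (restr (((1 : Matrix (Fin n) (Fin n) ℝ) - Aᵀ * A).mulVec v) Ω) ≤ δ * nrm v := by
  obtain ⟨hδ, -, hRIC⟩ := hA
  set w := ((1 : Matrix (Fin n) (Fin n) ℝ) - Aᵀ * A).mulVec v with hw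
  set u := restr w Ω with hu
  have hpolar : nrm u ^ 2 = u ⬝ᵥ v - A.mulVec u ⬝ᵥ A.mulVec v := by
    rw [nrm_sq, hu, restr_dotProduct_self, ← hu, hw, dotProduct_one_sub_mulVec]
  have hsparse : ∀ s : ℝ, sparse t (u + s • v) := fun s =>
    sparse_of_support_subset hcard fun i hi => by
      simp only [Finset.mem_union, suppF, Finset.mem_filter, Finset.mem_univ, true_and,
        not_or, not_not] at hi
      simp [hu, restr, hi.1, hi.2]
  have hquad : ∀ s : ℝ,
      0 ≤ (δ * nrm v ^ 2) * (s * s) + (-2 * nrm u ^ 2) * s + δ * nrm u ^ 2 := by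
    intro s
    have h1 := (hRIC _ (hsparse s)).1
    have h2 := (hRIC _ (hsparse (-s))).2
    rw [Matrix.mulVec_add, Matrix.mulVec_smul, nrm_sq_add_smul, nrm_sq_add_smul] at h1 h2
    have h3 : s * nrm u ^ 2 = s * (u ⬝ᵥ v) - s * (A.mulVec u ⬝ᵥ A.mulVec v) := by
      rw [hpolar]; ring
    linarith
  have hdisc := discrim_le_zero hquad
  rw [discrim] at hdisc
  rcases (nrm_nonneg u).eq_or_lt with h0 | hpos
  · rw [← h0]
    exact mul_nonneg hδ (nrm_nonneg v)
  · refine (sq_le_sq₀ hpos.le (mul_nonneg hδ (nrm_nonneg v))).mp ?_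
    refine le_of_mul_le_mul_left ?_ (pow_pos hpos 2)
    linarith
end

section
/- Let A ∈ ℝ^{m×n}, y ∈ ℝ^m, let x* ∈ ℝⁿ be k-sparse and set η = y − Ax*. Let δ₁ and δ₂ be restricted isometry constants of orders k and 2k for A with δ₂ < 1. Let u ∈ ℝⁿ and let ŵ ∈ {0,1}ⁿ with eᵀŵ = k satisfy ‖y − A(u ⊗ ŵ)‖₂² ≤ ‖y − A(u ⊗ w)‖₂² for every w ∈ {0,1}ⁿ with eᵀw = k. Then for every w* ∈ {0,1}ⁿ with eᵀw* = k and supp(x*) ⊆ supp(w*): ‖u ⊗ ŵ − x*‖₂ ≤ √((1+δ₁)/(1−δ₂))·‖(x* − u) ⊗ w*‖₂ + (2/√(1−δ₂))·‖η‖₂. -/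
/-!
Write `r = u ⊗ ŵ − x*`, which is `2k`-sparse, so `√(1 − δ₂) ‖r‖ ≤ ‖A r‖` (`RIC.sqrt_mul_nrm_le`).
Since `A r = η − (y − A (u ⊗ ŵ))`, the triangle inequality and the optimality of `ŵ` give
`‖A r‖ ≤ ‖y − A (u ⊗ w*)‖ + ‖η‖`. As `w*` equals `1` on the support of `x*`, one has
`y − A (u ⊗ w*) = A ((x* − u) ⊗ w*) + η`, and the argument of `A` is `k`-sparse, so the norm is
at most `√(1 + δ₁) ‖(x* − u) ⊗ w*‖ + ‖η‖` (`RIC.nrm_mulVec_le`). Divide by `√(1 − δ₂)`.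
-/

open Matrix Finset Filter

/-- Transfers Mathlib's Euclidean norm facts to `nrm`. -/
lemma nrm_eq_norm {n : ℕ} (x : Fin n → ℝ) : nrm x = ‖WithLp.toLp 2 x‖ := by
  simp [nrm, EuclideanSpace.norm_eq]

lemma nrm_add_le {n : ℕ} (x y : Fin n → ℝ) : nrm (x + y) ≤ nrm x + nrm y := by
  simpa only [nrm_eq_norm, WithLp.toLp_add] using
    norm_add_le (WithLp.toLp 2 x) (WithLp.toLp 2 y)

lemma nrm_sub_le {n : ℕ} (x y : Fin n → ℝ) : nrm (x - y) ≤ nrm x + nrm y := by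
  simpa only [nrm_eq_norm, WithLp.toLp_sub] using
    norm_sub_le (WithLp.toLp 2 x) (WithLp.toLp 2 y)

lemma RIC.sqrt_mul_nrm_le {m n s : ℕ} {A : Matrix (Fin m) (Fin n) ℝ} {δ : ℝ} (h : RIC A s δ)
    {x : Fin n → ℝ} (hx : sparse s x) : Real.sqrt (1 - δ) * nrm x ≤ nrm (A.mulVec x) := by
  refine le_of_sq_le_sq ?_ (nrm_nonneg _)
  rw [mul_pow, Real.sq_sqrt (by linarith [h.2.1])]
  exact (h.2.2 x hx).1

lemma RIC.nrm_mulVec_le {m n s : ℕ} {A : Matrix (Fin m) (Fin n) ℝ} {δ : ℝ} (h : RIC A s δ)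
    {x : Fin n → ℝ} (hx : sparse s x) : nrm (A.mulVec x) ≤ Real.sqrt (1 + δ) * nrm x := by
  refine le_of_sq_le_sq ?_ (mul_nonneg (Real.sqrt_nonneg _) (nrm_nonneg _))
  rw [mul_pow, Real.sq_sqrt (by linarith [h.1])]
  exact (h.2.2 x hx).2

/-- For a `0`-`1` vector the entry sum counts the support. -/
lemma sparse_of_binary {n k : ℕ} {w : Fin n → ℝ} (hw : ∀ i, w i = 0 ∨ w i = 1)
    (hsum : ∑ i, w i = (k : ℝ)) : sparse k w := by
  have h : ∑ i, w i = ∑ i, if w i ≠ 0 then (1 : ℝ) else 0 :=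
    Finset.sum_congr rfl fun i _ => by rcases hw i with h | h <;> simp [h]
  rw [h, Finset.sum_boole] at hsum
  exact (Nat.cast_injective hsum).le

lemma sparse_mul {n k : ℕ} {w : Fin n → ℝ} (hw : sparse k w) (v : Fin n → ℝ) :
    sparse k (fun i => v i * w i) :=
  (Finset.card_le_card (Finset.monotone_filter_right _ fun _ _ h =>
    right_ne_zero_of_mul h)).trans hw

lemma sparse_sub {n k : ℕ} {v w : Fin n → ℝ} (hv : sparse k v) (hw : sparse k w) :
    sparse (2 * k) (fun i => v i - w i) := by
  classical
  have hsub : (Finset.univ.filter fun i => v i - w i ≠ 0) ⊆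
      (Finset.univ.filter fun i => v i ≠ 0) ∪ Finset.univ.filter fun i => w i ≠ 0 := by
    intro i
    simp only [Finset.mem_filter, Finset.mem_union, Finset.mem_univ, true_and]
    contrapose!
    rintro ⟨h, h'⟩
    simp [h, h']
  refine ((Finset.card_le_card hsub).trans (Finset.card_union_le _ _)).trans ?_
  unfold sparse at hv hw
  omega

theorem stmt2 {m n : ℕ} (k : ℕ) (A : Matrix (Fin m) (Fin n) ℝ) (y : Fin m → ℝ)
    (xs : Fin n → ℝ) (hxs : sparse k xs) (η : Fin m → ℝ) (hη : η = y - A.mulVec xs)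
    (δ₁ δ₂ : ℝ) (h1 : RIC A k δ₁) (h2 : RIC A (2 * k) δ₂)
    (u wh : Fin n → ℝ) (hwhbin : ∀ i, wh i = 0 ∨ wh i = 1)
    (hwhsum : ∑ i, wh i = (k : ℝ))
    (hopt : ∀ w : Fin n → ℝ, (∀ i, w i = 0 ∨ w i = 1) → (∑ i, w i) = (k : ℝ) →
      nrm (y - A.mulVec (fun i => u i * wh i)) ^ 2 ≤
        nrm (y - A.mulVec (fun i => u i * w i)) ^ 2)
    (ws : Fin n → ℝ) (hwsbin : ∀ i, ws i = 0 ∨ ws i = 1)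
    (hwssum : ∑ i, ws i = (k : ℝ)) (hsupp : suppF xs ⊆ suppF ws) :
    nrm (fun i => u i * wh i - xs i) ≤
      Real.sqrt ((1 + δ₁) / (1 - δ₂)) * nrm (fun i => (xs i - u i) * ws i) +
        2 / Real.sqrt (1 - δ₂) * nrm η := by
  have hd : 0 < Real.sqrt (1 - δ₂) := Real.sqrt_pos.2 (by linarith [h2.2.1])
  have hlow := h2.sqrt_mul_nrm_le
    (sparse_sub (sparse_mul (sparse_of_binary hwhbin hwhsum) u) hxs)
  have hup := h1.nrm_mulVec_le
    (sparse_mul (sparse_of_binary hwsbin hwssum) fun i => xs i - u i)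
  have hA : A.mulVec (fun i => u i * wh i - xs i) =
      η - (y - A.mulVec fun i => u i * wh i) := by
    have : (fun i => u i * wh i - xs i) = (fun i => u i * wh i) - xs := rfl
    rw [this, Matrix.mulVec_sub, hη]
    abel
  have hxw : (fun i => (xs i - u i) * ws i) = xs - fun i => u i * ws i := by
    funext i
    have key : xs i * ws i = xs i := by
      by_cases hx : xs i = 0
      · simp [hx]
      · have hi : ws i ≠ 0 := by
          have : i ∈ suppF ws := hsupp (by simp [suppF, hx])
          simpa [suppF] using this
        rw [(hwsbin i).resolve_left hi, mul_one]
    simp [sub_mul, key]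
  have hB : y - A.mulVec (fun i => u i * ws i) =
      A.mulVec (fun i => (xs i - u i) * ws i) + η := by
    rw [hxw, Matrix.mulVec_sub, hη]
    abel
  have hopt' := le_of_sq_le_sq (hopt ws hwsbin hwssum) (nrm_nonneg _)
  have t1 := nrm_sub_le η (y - A.mulVec fun i => u i * wh i)
  have t2 := nrm_add_le (A.mulVec fun i => (xs i - u i) * ws i) η
  rw [← hA] at t1
  rw [← hB] at t2
  rw [Real.sqrt_div (by linarith [h1.1]), div_mul_eq_mul_div, div_mul_eq_mul_div, ← add_div,
    le_div_iff₀ hd]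
  linarith
end

section
/- Let q ≥ s be positive integers. For every z ∈ ℝⁿ and every s-sparse u ∈ ℝⁿ, if h is a hard thresholding of z at level q with support Ω and Λ = supp(u), then ‖u − h‖₂ ≤ ((√5+1)/2)·‖(u − z)_{Λ∪Ω}‖₂. -/
/-! Write `Λ = suppF u`, `A = Λ \ Ω`, `B = Ω \ Λ` and let `φ = (√5 + 1) / 2`, so `φ² = φ + 1`.
As `|A| ≤ |B|` and every entry of `z` on `Ω` dominates every entry off `Ω`, the energy of `z` on `A`
is at most its energy on `B` (`sum_sdiff_le`). On `A`, Young's inequality with weight `φ` gives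
`u² ≤ φ² (u - z)² + φ z²`; the term `φ ∑_A z² ≤ φ ∑_B z²` is then absorbed on `B`, where
`z² + φ z² = φ² z²`, and on `Λ ∩ Ω` one only needs `1 ≤ φ²`. -/

open Matrix Finset Filter

/-- Exchange inequality for hard thresholding: off `Ω`, a set no larger than `Ω` carries no more
energy than what it misses of `Ω`. -/
lemma sum_sdiff_le {n : ℕ} (z : Fin n → ℝ) (L Ω : Finset (Fin n)) (hc : L.card ≤ Ω.card)
    (hz : ∀ i ∈ Ω, ∀ j ∉ Ω, |z j| ≤ |z i|) :
    ∑ i ∈ L \ Ω, z i ^ 2 ≤ ∑ i ∈ Ω \ L, z i ^ 2 := by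
  have hcard : (L \ Ω).card ≤ (Ω \ L).card := Finset.card_sdiff_le_card_sdiff_iff.2 hc
  rcases (Ω \ L).eq_empty_or_nonempty with he | hne
  · rw [he, Finset.card_empty, Nat.le_zero, Finset.card_eq_zero] at hcard
    rw [he, hcard]
    -- The least squared entry on `Ω \ L` separates the two sums.
  · obtain ⟨k, hk, hmin⟩ := Finset.exists_min_image (Ω \ L) (fun i => z i ^ 2) hne
    calc ∑ i ∈ L \ Ω, z i ^ 2 ≤ (L \ Ω).card • z k ^ 2 :=
          Finset.sum_le_card_nsmul _ _ _ fun j hj =>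
            sq_le_sq.2 (hz k (Finset.mem_sdiff.1 hk).1 j (Finset.mem_sdiff.1 hj).2)
      _ ≤ (Ω \ L).card • z k ^ 2 := nsmul_le_nsmul_left (sq_nonneg _) hcard
      _ ≤ ∑ i ∈ Ω \ L, z i ^ 2 := Finset.card_nsmul_le_sum _ _ _ hmin

theorem stmt3 {n : ℕ} (q s : ℕ) (hs : 0 < s) (hqs : s ≤ q) (z u : Fin n → ℝ)
    (hu : sparse s u) (h : Fin n → ℝ) (Ω : Finset (Fin n)) (hHT : IsHT q z h Ω) :
    nrm (u - h) ≤ (Real.sqrt 5 + 1) / 2 * nrm (restr (u - z) (suppF u ∪ Ω)) := by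
  obtain ⟨hcard, hin, hout, hz⟩ := hHT
  have hex := sum_sdiff_le z (suppF u) Ω (hu.trans (hqs.trans hcard.ge)) hz
  obtain ⟨φ, hφ⟩ : ∃ φ, φ = (Real.sqrt 5 + 1) / 2 := ⟨_, rfl⟩
  have h5 : Real.sqrt 5 ^ 2 = 5 := Real.sq_sqrt (by norm_num)
  have hpos : 0 < φ := by rw [hφ]; positivity
  have hgold : φ ^ 2 = φ + 1 := by rw [hφ]; linarith
  rw [← hφ]
  unfold nrm
  rw [← Real.sqrt_sq hpos.le, ← Real.sqrt_mul (sq_nonneg φ)]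
  apply Real.sqrt_le_sqrt
  have key : ∀ i, (u - h) i ^ 2 ≤ φ ^ 2 * restr (u - z) (suppF u ∪ Ω) i ^ 2
      + φ * ((if i ∈ suppF u \ Ω then z i ^ 2 else 0)
        - (if i ∈ Ω \ suppF u then z i ^ 2 else 0)) := by
    intro i
    by_cases hL : i ∈ suppF u <;> by_cases hO : i ∈ Ω
    · simp only [restr, Finset.mem_union, Finset.mem_sdiff, hL, hO, Pi.sub_apply, hin i hO]
      simp
      nlinarith [sq_nonneg (u i - z i)]
    · simp only [restr, Finset.mem_union, Finset.mem_sdiff, hL, hO, Pi.sub_apply, hout i hO]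
      simp
      -- Young's inequality: the difference of the sides is `φ (u - z - z / φ)²`.
      have hd : φ * (φ ^ 2 * (u i - z i) ^ 2 + φ * z i ^ 2 - u i ^ 2)
          = (φ * (u i - z i) - z i) ^ 2 := by
        linear_combination (φ * (u i - z i) ^ 2 + z i ^ 2) * hgold
      have := nonneg_of_mul_nonneg_right (hd ▸ sq_nonneg _) hpos
      linarith
    · have hu0 : u i = 0 := by simpa [suppF] using hL
      simp only [restr, Finset.mem_union, Finset.mem_sdiff, hL, hO, Pi.sub_apply, hin i hO, hu0]
      simp
      rw [hgold]
      linarith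
    · have hu0 : u i = 0 := by simpa [suppF] using hL
      simp [restr, hL, hO, hout i hO, hu0]
  have hsum := Finset.sum_le_sum fun i (_ : i ∈ Finset.univ) => key i
  rw [Finset.sum_add_distrib, ← Finset.mul_sum, ← Finset.mul_sum, Finset.sum_sub_distrib,
    Finset.sum_ite_mem, Finset.sum_ite_mem, Finset.univ_inter, Finset.univ_inter] at hsum
  have := mul_nonneg hpos.le (sub_nonneg.2 hex)
  linarith
end
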